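/- arXiv:1903.05926 — 4 statements merged into one kernel-verified Lean document; each statement's English description precedes it below -/
import Mathlib

section
/- Let ι be a nonempty finite index type with n elements, x : ι → ℝ a vector, and β > 0. Then the gap between the log-sum-exp and the Boltzmann softmax equals (1/β) times the entropy of the Boltzmann weights: L_β(x) − boltz_β(x) = (1/β)·∑_i (−p_i·log p_i), where p_i = exp(β·x_i)/∑_j exp(β·x_j). -/
/-!
Since `negMulLog (a * b) = b * negMulLog a + a * negMulLog b`, normalizing weights `a i` of total
mass `A` to `a i / A` turns their entropy into `log A + (∑ i, negMulLog (a i)) / A`. For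
`a i = exp (β * x i)` the two terms are `β * lse β x` and `-(β * boltz β x)`.
-/

noncomputable def boltz {ι : Type*} [Fintype ι] (β : ℝ) (x : ι → ℝ) : ℝ :=
  (∑ i, Real.exp (β * x i) * x i) / ∑ i, Real.exp (β * x i)

noncomputable def lse {ι : Type*} [Fintype ι] (β : ℝ) (x : ι → ℝ) : ℝ :=
  (1 / β) * Real.log (∑ i, Real.exp (β * x i))

open Real

theorem sum_negMulLog_div_sum {ι : Type*} (s : Finset ι) (a : ι → ℝ) (ha : ∑ i ∈ s, a i ≠ 0) :
    ∑ i ∈ s, negMulLog (a i / ∑ j ∈ s, a j) =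
      log (∑ i ∈ s, a i) + (∑ i ∈ s, negMulLog (a i)) / ∑ i ∈ s, a i := by
  set A := ∑ i ∈ s, a i with hA
  calc ∑ i ∈ s, negMulLog (a i / A)
      = A⁻¹ * ∑ i ∈ s, negMulLog (a i) + A * negMulLog A⁻¹ := by
        simp only [div_eq_mul_inv, negMulLog_mul, Finset.sum_add_distrib, ← Finset.mul_sum,
          ← Finset.sum_mul, ← hA]
    _ = log A + (∑ i ∈ s, negMulLog (a i)) / A := by
        rw [negMulLog, log_inv]
        field_simp
        ring

theorem negMulLog_exp (t : ℝ) : negMulLog (exp t) = -(exp t * t) := by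
  rw [negMulLog, log_exp, neg_mul]

theorem sum_negMulLog_exp_div_sum_exp {ι : Type*} {s : Finset ι} (hs : s.Nonempty) (u : ι → ℝ) :
    ∑ i ∈ s, negMulLog (exp (u i) / ∑ j ∈ s, exp (u j)) =
      log (∑ i ∈ s, exp (u i)) - (∑ i ∈ s, exp (u i) * u i) / ∑ i ∈ s, exp (u i) := by
  have hZ : 0 < ∑ i ∈ s, exp (u i) := Finset.sum_pos (fun i _ => exp_pos (u i)) hs
  rw [sum_negMulLog_div_sum s _ hZ.ne']
  simp only [negMulLog_exp, Finset.sum_neg_distrib, neg_div, sub_eq_add_neg]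

theorem mul_lse {ι : Type*} [Fintype ι] {β : ℝ} (hβ : β ≠ 0) (x : ι → ℝ) :
    β * lse β x = log (∑ i, exp (β * x i)) := by
  rw [lse, ← mul_assoc, mul_one_div_cancel hβ, one_mul]

theorem mul_boltz {ι : Type*} [Fintype ι] (β : ℝ) (x : ι → ℝ) :
    β * boltz β x = (∑ i, exp (β * x i) * (β * x i)) / ∑ i, exp (β * x i) := by
  simp only [boltz, ← mul_div_assoc, Finset.mul_sum, mul_left_comm β]

theorem lse_sub_boltz_eq_entropy_general {ι : Type*} [Fintype ι] [Nonempty ι]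
    (x : ι → ℝ) (β : ℝ) (hβ : β ≠ 0) (p : ι → ℝ)
    (hp : ∀ i, p i = Real.exp (β * x i) / ∑ j, Real.exp (β * x j)) :
    lse β x - boltz β x = (1 / β) * ∑ i, -(p i * Real.log (p i)) := by
  have entropy_eq : ∑ i, -(p i * log (p i)) = β * lse β x - β * boltz β x :=
    calc ∑ i, -(p i * log (p i))
        = ∑ i, negMulLog (exp (β * x i) / ∑ j, exp (β * x j)) := by
          simp only [hp, negMulLog_eq_neg]
      _ = β * lse β x - β * boltz β x := by
          rw [sum_negMulLog_exp_div_sum_exp Finset.univ_nonempty, mul_lse hβ, mul_boltz]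
  rw [entropy_eq, ← mul_sub, ← mul_assoc, one_div_mul_cancel hβ, one_mul]

theorem lse_sub_boltz_eq_entropy {ι : Type*} [Fintype ι] [Nonempty ι]
    (x : ι → ℝ) (β : ℝ) (hβ : 0 < β) (p : ι → ℝ)
    (hp : ∀ i, p i = Real.exp (β * x i) / ∑ j, Real.exp (β * x j)) :
    lse β x - boltz β x = (1 / β) * ∑ i, -(p i * Real.log (p i)) :=
  lse_sub_boltz_eq_entropy_general x β hβ.ne' p hp
end

section
/- Let ι be a nonempty finite index type with n elements, x : ι → ℝ a vector, and β > 0. Then L_β(x) − boltz_β(x) ≤ log(n)/β. -/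
open Real Finset

theorem sum_negMulLog_le_log_card {ι : Type*} {s : Finset ι} {p : ι → ℝ}
    (hp : ∀ i ∈ s, 0 ≤ p i) (hsum : ∑ i ∈ s, p i = 1) :
    ∑ i ∈ s, negMulLog (p i) ≤ log #s := by
  have hs : s.Nonempty := nonempty_of_sum_ne_zero (hsum.trans_ne one_ne_zero)
  have hn : (0 : ℝ) < #s := mod_cast hs.card_pos
  have jensen : (#s : ℝ)⁻¹ * ∑ i ∈ s, negMulLog (p i) ≤ negMulLog (#s : ℝ)⁻¹ := by
    simpa [← mul_sum, hsum] using
      concaveOn_negMulLog.le_map_sum (w := fun _ ↦ (#s : ℝ)⁻¹) (fun _ _ ↦ by positivity)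
        (by simp [hn.ne']) hp
  rw [negMulLog, log_inv, neg_mul_neg] at jensen
  exact le_of_mul_le_mul_left jensen (inv_pos.2 hn)

theorem sum_exp_pos {ι : Type*} [Fintype ι] [Nonempty ι] (f : ι → ℝ) : 0 < ∑ i, exp (f i) :=
  sum_pos (fun i _ ↦ exp_pos (f i)) univ_nonempty

section GibbsWeight

variable {ι : Type*} [Fintype ι]

/-- The Gibbs (softmax) probability of the index `i` at inverse temperature `β`, where `x` is
the vector of negated energies. `boltz β x` is the mean of `x` under these probabilities. -/
noncomputable def gibbsWeight (β : ℝ) (x : ι → ℝ) (i : ι) : ℝ :=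
  exp (β * x i) / ∑ j, exp (β * x j)

theorem gibbsWeight_nonneg (β : ℝ) (x : ι → ℝ) (i : ι) : 0 ≤ gibbsWeight β x i := by
  unfold gibbsWeight
  positivity

theorem sum_gibbsWeight_mul (β : ℝ) (x : ι → ℝ) :
    ∑ i, gibbsWeight β x i * x i = boltz β x := by
  simp only [gibbsWeight, boltz, sum_div, div_mul_eq_mul_div]

theorem log_gibbsWeight (β : ℝ) (x : ι → ℝ) (i : ι) :
    log (gibbsWeight β x i) = β * x i - log (∑ j, exp (β * x j)) := by
  have : Nonempty ι := ⟨i⟩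
  rw [gibbsWeight, log_div (exp_ne_zero _) (sum_exp_pos _).ne', log_exp]

variable [Nonempty ι]

theorem sum_gibbsWeight_eq_one (β : ℝ) (x : ι → ℝ) : ∑ i, gibbsWeight β x i = 1 := by
  simp only [gibbsWeight, ← sum_div]
  exact div_self (sum_exp_pos _).ne'

theorem sum_negMulLog_gibbsWeight (β : ℝ) (x : ι → ℝ) :
    ∑ i, negMulLog (gibbsWeight β x i) = log (∑ i, exp (β * x i)) - β * boltz β x := by
  set logZ := log (∑ i, exp (β * x i)) with logZ_def
  calc ∑ i, negMulLog (gibbsWeight β x i)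
      = ∑ i, (gibbsWeight β x i * logZ - β * (gibbsWeight β x i * x i)) := by
        refine sum_congr rfl fun i _ ↦ ?_
        rw [negMulLog, log_gibbsWeight, ← logZ_def]
        ring
    _ = (∑ i, gibbsWeight β x i) * logZ - β * ∑ i, gibbsWeight β x i * x i := by
        rw [sum_sub_distrib, sum_mul, mul_sum]
    _ = logZ - β * boltz β x := by
        rw [sum_gibbsWeight_eq_one, one_mul, sum_gibbsWeight_mul]

theorem lse_sub_boltz_eq_sum_negMulLog_gibbsWeight_div {β : ℝ} (hβ : β ≠ 0) (x : ι → ℝ) :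
    lse β x - boltz β x = (∑ i, negMulLog (gibbsWeight β x i)) / β := by
  rw [sum_negMulLog_gibbsWeight, lse]
  field_simp

end GibbsWeight

theorem lse_sub_boltz_le {ι : Type*} [Fintype ι] [Nonempty ι]
    (x : ι → ℝ) (β : ℝ) (hβ : 0 < β) :
    lse β x - boltz β x ≤ Real.log (Fintype.card ι) / β := by
  have entropy_le : ∑ i, negMulLog (gibbsWeight β x i) ≤ log (Fintype.card ι) :=
    sum_negMulLog_le_log_card (fun i _ ↦ gibbsWeight_nonneg β x i) (sum_gibbsWeight_eq_one β x)
  rw [lse_sub_boltz_eq_sum_negMulLog_gibbsWeight_div hβ.ne']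
  gcongr
end

section
/- Let ι be a nonempty finite index type with n elements, x : ι → ℝ a vector, and β > 0. Then |boltz_β(x) − max_i x_i| ≤ log(n)/β. -/
noncomputable def fmax {ι : Type*} [Fintype ι] [Nonempty ι] (x : ι → ℝ) : ℝ :=
  Finset.univ.sup' Finset.univ_nonempty x

section GibbsMean

variable {ι : Type*} {s : Finset ι}

theorem sum_exp_pos_s3 (hs : s.Nonempty) (f : ι → ℝ) : 0 < ∑ i ∈ s, Real.exp (f i) :=
  Finset.sum_pos (fun i _ => Real.exp_pos (f i)) hs

theorem centerMass_exp_exp_neg (s : Finset ι) (f : ι → ℝ) :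
    s.centerMass (fun i => Real.exp (f i)) (fun i => Real.exp (-f i)) =
      s.card / ∑ i ∈ s, Real.exp (f i) := by
  simp [Finset.centerMass, ← Real.exp_add, div_eq_inv_mul]

theorem sum_exp_le_card_mul_exp_centerMass (s : Finset ι) (f : ι → ℝ) :
    ∑ i ∈ s, Real.exp (f i) ≤
      s.card * Real.exp (s.centerMass (fun i => Real.exp (f i)) f) := by
  obtain rfl | hs := s.eq_empty_or_nonempty
  · simp
  have centerMass_neg : s.centerMass (fun i => Real.exp (f i)) (fun i => -f i) =
      -s.centerMass (fun i => Real.exp (f i)) f := by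
    simp [Finset.centerMass]
  have jensen := convexOn_exp.map_centerMass_le (p := fun i => -f i)
    (fun i _ => (Real.exp_pos (f i)).le) (sum_exp_pos_s3 hs f) (fun i _ => Set.mem_univ _)
  rw [centerMass_neg, Function.comp_def, centerMass_exp_exp_neg, le_div_iff₀ (sum_exp_pos_s3 hs f),
    Real.exp_neg] at jensen
  rwa [inv_mul_le_iff₀ (Real.exp_pos _), mul_comm] at jensen

theorem le_centerMass_exp_add_log_card {i : ι} (hi : i ∈ s) (f : ι → ℝ) :
    f i ≤ s.centerMass (fun j => Real.exp (f j)) f + Real.log s.card := by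
  have card_pos : (0 : ℝ) < s.card := mod_cast Finset.card_pos.2 ⟨i, hi⟩
  rw [← Real.exp_le_exp, Real.exp_add, Real.exp_log card_pos, mul_comm]
  calc
    Real.exp (f i) ≤ ∑ j ∈ s, Real.exp (f j) :=
      Finset.single_le_sum (f := fun j => Real.exp (f j)) (fun j _ => (Real.exp_pos (f j)).le) hi
    _ ≤ s.card * Real.exp (s.centerMass (fun j => Real.exp (f j)) f) :=
      sum_exp_le_card_mul_exp_centerMass s f

end GibbsMean

section Boltz

variable {ι : Type*} [Fintype ι]

theorem boltz_eq_centerMass (β : ℝ) (x : ι → ℝ) :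
    boltz β x = Finset.univ.centerMass (fun i => Real.exp (β * x i)) x := by
  simp [boltz, Finset.centerMass, div_eq_inv_mul]

theorem boltz_le_fmax [Nonempty ι] (β : ℝ) (x : ι → ℝ) : boltz β x ≤ fmax x := by
  rw [boltz_eq_centerMass]
  exact Finset.centerMass_le_sup (fun i _ => (Real.exp_pos (β * x i)).le)
    (sum_exp_pos_s3 Finset.univ_nonempty fun i => β * x i)

theorem mul_le_mul_boltz_add_log_card (β : ℝ) (x : ι → ℝ) (i : ι) :
    β * x i ≤ β * boltz β x + Real.log (Fintype.card ι) := by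
  rw [boltz_eq_centerMass, ← smul_eq_mul β (Finset.centerMass _ _ _), ← Finset.centerMass_smul]
  exact le_centerMass_exp_add_log_card (Finset.mem_univ i) fun j => β * x j

theorem fmax_le_boltz_add_log_card_div [Nonempty ι] {β : ℝ} (hβ : 0 < β) (x : ι → ℝ) :
    fmax x ≤ boltz β x + Real.log (Fintype.card ι) / β := by
  refine Finset.sup'_le _ _ fun i _ => le_of_mul_le_mul_left ?_ hβ
  rw [mul_add, mul_div_cancel₀ _ hβ.ne']
  exact mul_le_mul_boltz_add_log_card β x i

end Boltz

theorem abs_boltz_sub_max_le {ι : Type*} [Fintype ι] [Nonempty ι]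
    (x : ι → ℝ) (β : ℝ) (hβ : 0 < β) :
    |boltz β x - fmax x| ≤ Real.log (Fintype.card ι) / β := by
  rw [abs_sub_comm, abs_of_nonneg (sub_nonneg.2 (boltz_le_fmax β x)), sub_le_iff_le_add']
  exact fmax_le_boltz_add_log_card_div hβ x
end

section
/- Given a finite Markov decision process, for any two value functions V₁, V₂ : S → ℝ and any β > 0, ‖T_β V₁ − T_m V₂‖∞ ≤ γ·‖V₁ − V₂‖∞ + log(|A|)/β, where |A| is the number of actions. -/
noncomputable def fmin {ι : Type*} [Fintype ι] [Nonempty ι] (x : ι → ℝ) : ℝ :=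
  Finset.univ.inf' Finset.univ_nonempty x

noncomputable def Qval {S A : Type*} [Fintype S] (p : S → A → S → ℝ) (r : S → A → ℝ)
    (γ : ℝ) (V : S → ℝ) (s : S) (a : A) : ℝ :=
  r s a + γ * ∑ s', p s a s' * V s'

noncomputable def Tm {S A : Type*} [Fintype S] [Fintype A] [Nonempty A]
    (p : S → A → S → ℝ) (r : S → A → ℝ) (γ : ℝ) (V : S → ℝ) (s : S) : ℝ :=
  fmax (Qval p r γ V s)

noncomputable def Tb {S A : Type*} [Fintype S] [Fintype A]
    (p : S → A → S → ℝ) (r : S → A → ℝ) (γ : ℝ) (β : ℝ) (V : S → ℝ) (s : S) : ℝ :=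
  boltz β (Qval p r γ V s)

noncomputable def supNorm {S : Type*} [Fintype S] [Nonempty S] (V : S → ℝ) : ℝ :=
  fmax (fun s => |V s|)

section Maximum

variable {ι : Type*} [Fintype ι] [Nonempty ι] {x y : ι → ℝ} {c : ℝ}

theorem le_fmax (x : ι → ℝ) (i : ι) : x i ≤ fmax x :=
  Finset.le_sup' x (Finset.mem_univ i)

theorem fmax_le (h : ∀ i, x i ≤ c) : fmax x ≤ c :=
  Finset.sup'_le _ _ fun i _ => h i

theorem fmax_le_fmax_add (h : ∀ i, x i ≤ y i + c) : fmax x ≤ fmax y + c :=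
  fmax_le fun i => (h i).trans (add_le_add_left (le_fmax y i) c)

theorem abs_fmax_sub_fmax_le (h : ∀ i, |x i - y i| ≤ c) : |fmax x - fmax y| ≤ c := by
  refine abs_sub_le_iff.mpr ⟨?_, ?_⟩ <;> rw [sub_le_iff_le_add']
  · exact fmax_le_fmax_add fun i => sub_le_iff_le_add'.mp (abs_sub_le_iff.mp (h i)).1
  · exact fmax_le_fmax_add fun i => sub_le_iff_le_add'.mp (abs_sub_le_iff.mp (h i)).2

theorem abs_le_supNorm (x : ι → ℝ) (i : ι) : |x i| ≤ supNorm x :=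
  le_fmax (fun j => |x j|) i

theorem supNorm_le (h : ∀ i, |x i| ≤ c) : supNorm x ≤ c :=
  fmax_le h

end Maximum

section Boltzmann

variable {ι : Type*} [Fintype ι]

theorem sum_exp_pos_s6 [Nonempty ι] (x : ι → ℝ) : 0 < ∑ i, Real.exp (x i) :=
  Finset.sum_pos (fun i _ => Real.exp_pos (x i)) Finset.univ_nonempty

theorem sum_exp_le_card_mul_exp_boltz [Nonempty ι] (β : ℝ) (x : ι → ℝ) :
    ∑ i, Real.exp (β * x i) ≤ Fintype.card ι * Real.exp (β * boltz β x) := by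
  have hZ : 0 < ∑ i, Real.exp (β * x i) := sum_exp_pos_s6 _
  have jensen : Real.exp (-β * boltz β x) ≤ Fintype.card ι / ∑ i, Real.exp (β * x i) :=
    calc Real.exp (-β * boltz β x)
        = Real.exp (Finset.univ.centerMass (fun i => Real.exp (β * x i)) fun i => -β * x i) := by
          rw [boltz_eq_centerMass, ← smul_eq_mul, ← Finset.centerMass_smul]
          simp only [smul_eq_mul]
      _ ≤ Finset.univ.centerMass (fun i => Real.exp (β * x i)) fun i => Real.exp (-β * x i) :=
          convexOn_exp.map_centerMass_le (fun i _ => (Real.exp_pos _).le) hZ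
            fun i _ => Set.mem_univ _
      _ = Fintype.card ι / ∑ i, Real.exp (β * x i) := by
          simp [Finset.centerMass, ← Real.exp_add, div_eq_inv_mul]
  rwa [neg_mul, Real.exp_neg, inv_le_comm₀ (Real.exp_pos _) (by positivity), inv_div,
    div_le_iff₀' (by positivity)] at jensen

theorem abs_boltz_sub_fmax_le [Nonempty ι] {β : ℝ} (hβ : 0 < β) (x : ι → ℝ) :
    |boltz β x - fmax x| ≤ Real.log (Fintype.card ι) / β := by
  rw [abs_sub_comm, abs_of_nonneg (sub_nonneg.mpr (boltz_le_fmax β x)), sub_le_iff_le_add']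
  exact fmax_le_boltz_add_log_card_div hβ x

end Boltzmann

section Bellman

variable {S A : Type*} [Fintype S] [Nonempty S] {p : S → A → S → ℝ} {s : S}

theorem abs_Qval_sub_Qval_le {a : A} (hp : ∑ s', |p s a s'| ≤ 1) (r : S → A → ℝ) (γ : ℝ)
    (V W : S → ℝ) :
    |Qval p r γ V s a - Qval p r γ W s a| ≤ |γ| * supNorm (fun s' => V s' - W s') := by
  set d := supNorm (fun s' => V s' - W s')
  have hd (s' : S) : |V s' - W s'| ≤ d := abs_le_supNorm (fun s' => V s' - W s') s'
  have hd₀ : 0 ≤ d := (abs_nonneg _).trans (hd s)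
  calc |Qval p r γ V s a - Qval p r γ W s a|
      = |γ| * |∑ s', p s a s' * (V s' - W s')| := by
        simp only [Qval, add_sub_add_left_eq_sub, ← mul_sub, ← Finset.sum_sub_distrib, abs_mul]
    _ ≤ |γ| * ∑ s', |p s a s'| * |V s' - W s'| := by
        gcongr
        exact (Finset.abs_sum_le_sum_abs _ _).trans_eq (by simp only [abs_mul])
    _ ≤ |γ| * ∑ s', |p s a s'| * d := by
        gcongr with s'
        exact hd s'
    _ ≤ |γ| * d := by
        rw [← Finset.sum_mul]
        exact mul_le_mul_of_nonneg_left (mul_le_of_le_one_left hd₀ hp) (abs_nonneg γ)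

variable [Fintype A] [Nonempty A]

theorem abs_Tm_sub_Tm_le (hp : ∀ a, ∑ s', |p s a s'| ≤ 1) (r : S → A → ℝ) (γ : ℝ)
    (V W : S → ℝ) :
    |Tm p r γ V s - Tm p r γ W s| ≤ |γ| * supNorm (fun s' => V s' - W s') :=
  abs_fmax_sub_fmax_le fun a => abs_Qval_sub_Qval_le (hp a) r γ V W

theorem dbs_bellman_combined_bound_general (hp : ∀ s a, ∑ s', |p s a s'| ≤ 1)
    (r : S → A → ℝ) (γ : ℝ) (V₁ V₂ : S → ℝ) {β : ℝ} (hβ : 0 < β) :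
    supNorm (fun s => Tb p r γ β V₁ s - Tm p r γ V₂ s)
      ≤ |γ| * supNorm (fun s => V₁ s - V₂ s) + Real.log (Fintype.card A) / β :=
  supNorm_le fun s =>
    calc |Tb p r γ β V₁ s - Tm p r γ V₂ s|
        ≤ |Tb p r γ β V₁ s - Tm p r γ V₁ s| + |Tm p r γ V₁ s - Tm p r γ V₂ s| :=
          abs_sub_le _ _ _
      _ ≤ Real.log (Fintype.card A) / β + |γ| * supNorm (fun s => V₁ s - V₂ s) :=
          add_le_add (abs_boltz_sub_fmax_le hβ _) (abs_Tm_sub_Tm_le (hp s) r γ V₁ V₂)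
      _ = |γ| * supNorm (fun s => V₁ s - V₂ s) + Real.log (Fintype.card A) / β :=
          add_comm _ _

end Bellman

theorem dbs_bellman_combined_bound {S A : Type*} [Fintype S] [Fintype A] [Nonempty S] [Nonempty A]
    (p : S → A → S → ℝ) (hp0 : ∀ s a s', 0 ≤ p s a s') (hp1 : ∀ s a, ∑ s', p s a s' = 1)
    (r : S → A → ℝ) (γ : ℝ) (hγ0 : 0 ≤ γ) (hγ1 : γ < 1)
    (V₁ V₂ : S → ℝ) (β : ℝ) (hβ : 0 < β) :
    supNorm (fun s => Tb p r γ β V₁ s - Tm p r γ V₂ s)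
      ≤ γ * supNorm (fun s => V₁ s - V₂ s) + Real.log (Fintype.card A) / β := by
  have hp (s : S) (a : A) : ∑ s', |p s a s'| ≤ 1 := by
    simp only [abs_of_nonneg (hp0 _ _ _), hp1, le_refl]
  simpa only [abs_of_nonneg hγ0] using dbs_bellman_combined_bound_general hp r γ V₁ V₂ hβ
end
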